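/- Let d ≥ 2 and λ ∈ [0,1). Then there exists a function τ : H₊ → [0,∞) with τ(x) > 0 for every x ∈ H₊ \ {x*} and B[x, τ(x)] ⊆ H₊ for all x ∈ H₊, such that for every compact set K ⊆ H₊ the τ-perturbed Douglas–Rachford iterations starting in K converge to x* uniformly: for every ε > 0 there exists N such that for every n ≥ N, every x ∈ K, and every sequence φ : ℕ → H₊ with φ(0) = x satisfying, for each m, φ(m+1) ∈ B[T y, τ(T y)] for some y ∈ B[φ(m), τ(φ(m))], one has ‖φ(n) − x*‖ ≤ ε. -/

import Mathlib

noncomputable section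

open Metric Set Filter

/-- Euclidean space `ℝ^d` with `d = d' + 2 ≥ 2`. -/
abbrev Euc (d : ℕ) := EuclideanSpace ℝ (Fin (d + 2))

/-- The standard basis vectors. -/
def e (d : ℕ) (j : Fin (d + 2)) : Euc d := EuclideanSpace.single j 1

/-- The Douglas–Rachford operator for the unit sphere and the line
`L_λ = {t e₁ + λ e₂}`, given by its explicit formula
`T x = (x₁/‖x‖) e₁ + ((1 − 1/‖x‖) x₂ + λ) e₂ + (1 − 1/‖x‖) ∑_{j=3}^d x_j e_j`. -/
def DR (d : ℕ) (lam : ℝ) (x : Euc d) : Euc d :=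
  (x 0 / ‖x‖) • e d 0 + ((1 - 1 / ‖x‖) * x 1 + lam) • e d 1 +
    ∑ j ∈ Finset.univ.filter (fun j : Fin (d + 2) => 2 ≤ (j : ℕ)),
      ((1 - 1 / ‖x‖) * x j) • e d j

/-- The intersection point `x* = √(1−λ²) e₁ + λ e₂`. -/
def xStar (d : ℕ) (lam : ℝ) : Euc d := Real.sqrt (1 - lam ^ 2) • e d 0 + lam • e d 1

/-- `H₊ = {x : x₁ > 0}`. -/
def Hplus (d : ℕ) : Set (Euc d) := {x | 0 < x 0}

/-- A `σ`-perturbed solution of the iteration `x_{n+1} = T x_n` starting at `x` is a sequence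
`φ : ℕ → H₊` with `φ(0) = x` such that for every `n` there exists
`y ∈ B[φ(n), σ(φ(n))]` with `φ(n+1) ∈ B[T y, σ(T y)]`. -/
def PerturbedSol (d : ℕ) (T : Euc d → Euc d) (σ : Euc d → ℝ) (x : Euc d)
    (φ : ℕ → Euc d) : Prop :=
  φ 0 = x ∧ (∀ n : ℕ, φ n ∈ Hplus d) ∧
    ∀ n : ℕ, ∃ y ∈ closedBall (φ n) (σ (φ n)), φ (n + 1) ∈ closedBall (T y) (σ (T y))

/-!
The map `T` has a strict Lyapunov function on `H₊`, namely
`W x = 2 dist(x, L_λ)² + x₁² - 2 (1 - λ²) log x₁`. Its sublevel sets in `H₊` are compact, because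
`W x - W x* ≥ ‖x - x*‖²` and `-log x₁` blows up at the boundary. The inequality
`log ‖x‖ ≤ ‖x‖ - 1` yields
`W x - W (T x) ≥ x₁² (1 - 1/‖x‖)² + 2 ‖x‖ dist(x/‖x‖, L_λ)²`,
and the right-hand side vanishes only where the sphere meets the line, that is at `x*`.

A strict Lyapunov function with compact sublevel sets survives small perturbations: by compactness,
`W y - W w` is bounded below over the fibre `T y = w` of each `w ≠ x*`, so `τ w` can be chosen such
that an error of size `τ w` at `w` costs at most half of the decrease achieved by arriving at `w`.
After shrinking `τ x` further, every perturbed step from `x` still achieves a quarter of the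
decrease `W x - W (T x)`, and this is bounded below on compact sets that avoid `x*`.
-/

section StrictLyapunov

lemma le_sub_mul_of_antitone_of_le_sub {a : ℕ → ℝ} {η κ : ℝ} (ha : Antitone a)
    (hdec : ∀ n, η ≤ a n → a (n + 1) ≤ a n - κ) (n : ℕ) (hn : η ≤ a n) :
    a n ≤ a 0 - n * κ := by
  induction n with
  | zero => simp
  | succ n ih =>
    have hηn : η ≤ a n := hn.trans (ha n.le_succ)
    push_cast
    linarith [ih hηn, hdec n hηn]

variable {X : Type*} [MetricSpace X] {T : X → X} {W : X → ℝ} {U : Set X} {p x y z w : X}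
  {r r' : ℝ}

/-- `W` is a strict Lyapunov function for the iteration of `T` on `U` with equilibrium `p`. The
compactness of the sublevel sets within `U` makes `W` blow up both at infinity and at the boundary
of `U`. -/
structure IsStrictLyapunov (T : X → X) (W : X → ℝ) (U : Set X) (p : X) : Prop where
  isOpen : IsOpen U
  mapsTo : MapsTo T U U
  continuousOn_map : ContinuousOn T U
  continuousOn : ContinuousOn W U
  isCompact_sublevel : ∀ c, IsCompact {x ∈ U | W x ≤ c}
  map_fixed : T p = p
  map_lt : ∀ x ∈ U, x ≠ p → W (T x) < W x

/-- The radius `r` is a tolerable error at `x`, both before an application of `T` to a point near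
`x` and after an application of `T` with value `x`. The constants are such that two admissible
errors still leave a quarter of the unperturbed decrease of `W`. -/
structure IsAdmissibleRadius (T : X → X) (W : X → ℝ) (U : Set X) (x : X) (r : ℝ) : Prop where
  closedBall_subset : closedBall x r ⊆ U
  before_le : ∀ y ∈ closedBall x r, (W y + W (T y)) / 2 ≤ W x - (W x - W (T x)) / 4
  after_le : ∀ y ∈ U, T y = x → ∀ z ∈ closedBall x r, W z ≤ (W y + W x) / 2

lemma IsAdmissibleRadius.perturbed_step_le (hx : IsAdmissibleRadius T W U x r)
    (hTy : IsAdmissibleRadius T W U (T y) r') (hy : y ∈ closedBall x r)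
    (hz : z ∈ closedBall (T y) r') : W z ≤ W x - (W x - W (T x)) / 4 :=
  (hTy.after_le y (hx.closedBall_subset hy) rfl z hz).trans (hx.before_le y hy)

namespace IsStrictLyapunov

lemma map_le (h : IsStrictLyapunov T W U p) (hx : x ∈ U) : W (T x) ≤ W x := by
  rcases eq_or_ne x p with rfl | hxp
  · rw [h.map_fixed]
  · exact (h.map_lt x hx hxp).le

lemma isCompact_sublevel_inter_preimage (h : IsStrictLyapunov T W U p) {Y : Type*}
    [TopologicalSpace Y] {f : X → Y} (hf : ContinuousOn f U) {s : Set Y} (hs : IsClosed s)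
    (c : ℝ) : IsCompact ({x ∈ U | W x ≤ c} ∩ f ⁻¹' s) :=
  have hc := h.isCompact_sublevel c
  hc.of_isClosed_subset
    ((hf.mono (sep_subset _ _)).preimage_isClosed_of_isClosed hc.isClosed hs) inter_subset_left

lemma equilibrium_lt (h : IsStrictLyapunov T W U p) (hx : x ∈ U) (hxp : x ≠ p) : W p < W x := by
  obtain ⟨q, ⟨hqU, hqx⟩, hq_min⟩ := (h.isCompact_sublevel (W x)).exists_isMinOn ⟨x, hx, le_rfl⟩
    (h.continuousOn.mono (sep_subset _ _))
  have hqp : q = p := by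
    by_contra hne
    have hTq := h.map_lt q hqU hne
    exact hTq.not_ge (hq_min ⟨h.mapsTo hqU, hTq.le.trans hqx⟩)
  have hTx := h.map_lt x hx hxp
  calc W p = W q := by rw [hqp]
    _ ≤ W (T x) := hq_min ⟨h.mapsTo hx, hTx.le⟩
    _ < W x := hTx

lemma equilibrium_le (h : IsStrictLyapunov T W U p) (hx : x ∈ U) : W p ≤ W x := by
  rcases eq_or_ne x p with rfl | hxp
  · rfl
  · exact (h.equilibrium_lt hx hxp).le

lemma exists_gt_forall_le_of_map_eq (h : IsStrictLyapunov T W U p) (hwp : w ≠ p) :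
    ∃ v > W w, ∀ y ∈ U, T y = w → v ≤ W y := by
  have hfibre := h.isCompact_sublevel_inter_preimage h.continuousOn_map
    (isClosed_singleton (x := w)) (W w + 1)
  obtain ⟨v, hv, hvW⟩ := hfibre.exists_forall_le'
    (h.continuousOn.mono fun _ hy => hy.1.1) (a := W w) <| by
      rintro y ⟨⟨hyU, -⟩, rfl⟩
      exact h.map_lt y hyU fun hyp => hwp (by rw [hyp, h.map_fixed])
  refine ⟨min v (W w + 1), lt_min hv (lt_add_one _), fun y hy hyw => ?_⟩
  rcases le_total (W y) (W w + 1) with hle | hge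
  · exact (min_le_left _ _).trans (hvW y ⟨⟨hy, hle⟩, hyw⟩)
  · exact (min_le_right _ _).trans hge

lemma isAdmissibleRadius_zero (h : IsStrictLyapunov T W U p) (hp : p ∈ U) :
    IsAdmissibleRadius T W U p 0 := by
  constructor <;> simp only [closedBall_zero, singleton_subset_iff, mem_singleton_iff, forall_eq]
  · exact hp
  · rw [h.map_fixed]
    linarith
  · intro y hy hyp
    have := h.map_le hy
    rw [hyp] at this
    linarith

lemma exists_isAdmissibleRadius (h : IsStrictLyapunov T W U p) (hx : x ∈ U) (hxp : x ≠ p) :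
    ∃ r > 0, IsAdmissibleRadius T W U x r := by
  have hU := h.isOpen.mem_nhds hx
  have hW := h.continuousOn.continuousAt hU
  have hWT : ContinuousAt (fun y => (W y + W (T y)) / 2) x :=
    (hW.add ((h.continuousOn.comp h.continuousOn_map h.mapsTo).continuousAt hU)).div_const 2
  have hlt := h.map_lt x hx hxp
  obtain ⟨v, hv, hvW⟩ := h.exists_gt_forall_le_of_map_eq hxp
  have hbefore : ∀ᶠ y in nhds x, (W y + W (T y)) / 2 < W x - (W x - W (T x)) / 4 :=
    hWT.eventually_lt_const (by linarith)
  have hafter : ∀ᶠ z in nhds x, W z < (v + W x) / 2 := hW.eventually_lt_const (by linarith)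
  obtain ⟨r, hr, hball⟩ := nhds_basis_closedBall.eventually_iff.1
    ((eventually_mem_set.2 hU).and (hbefore.and hafter))
  refine ⟨r, hr, fun y hy => (hball hy).1, fun y hy => (hball hy).2.1.le, fun y hy hyx z hz => ?_⟩
  linarith [(hball hz).2.2, hvW y hy hyx]

lemma exists_forall_isAdmissibleRadius (h : IsStrictLyapunov T W U p) :
    ∃ τ : X → ℝ, ∀ x ∈ U, 0 ≤ τ x ∧ (x ≠ p → 0 < τ x) ∧ IsAdmissibleRadius T W U x (τ x) := by
  have hradius : ∀ x, ∃ r, x ∈ U → 0 ≤ r ∧ (x ≠ p → 0 < r) ∧ IsAdmissibleRadius T W U x r := by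
    intro x
    rcases eq_or_ne x p with rfl | hxp
    · exact ⟨0, fun hx => ⟨le_rfl, fun hne => absurd rfl hne, h.isAdmissibleRadius_zero hx⟩⟩
    · by_cases hx : x ∈ U
      · obtain ⟨r, hr, hadm⟩ := h.exists_isAdmissibleRadius hx hxp
        exact ⟨r, fun _ => ⟨hr.le, fun _ => hr, hadm⟩⟩
      · exact ⟨0, fun hx' => absurd hx' hx⟩
  choose τ hτ using hradius
  exact ⟨τ, hτ⟩

lemma exists_pos_forall_le_sub_map (h : IsStrictLyapunov T W U p) {η : ℝ} (hη : W p < η)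
    (v : ℝ) : ∃ κ > 0, ∀ x ∈ U, η ≤ W x → W x ≤ v → κ ≤ W x - W (T x) := by
  have hdecrease : ContinuousOn (fun x => W x - W (T x)) U :=
    h.continuousOn.sub (h.continuousOn.comp h.continuousOn_map h.mapsTo)
  obtain ⟨κ, hκ, hle⟩ := (h.isCompact_sublevel_inter_preimage h.continuousOn
    (isClosed_Ici (a := η)) v).exists_forall_le' (hdecrease.mono fun _ hx => hx.1.1) (a := 0) <| by
      rintro x ⟨⟨hxU, -⟩, hηx : η ≤ W x⟩
      exact sub_pos.2 (h.map_lt x hxU fun hxp => (hxp ▸ hη).not_ge hηx)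
  exact ⟨κ, hκ, fun x hx hηx hxv => hle x ⟨⟨hx, hxv⟩, hηx⟩⟩

lemma exists_gt_forall_le_of_le_dist (h : IsStrictLyapunov T W U p) {ε : ℝ} (hε : 0 < ε)
    (v : ℝ) : ∃ η > W p, ∀ x ∈ U, W x ≤ v → ε ≤ dist x p → η ≤ W x := by
  obtain ⟨η, hη, hle⟩ := (h.isCompact_sublevel_inter_preimage (f := fun x => dist x p)
    (by fun_prop) (isClosed_Ici (a := ε)) v).exists_forall_le'
      (h.continuousOn.mono fun _ hx => hx.1.1) (a := W p) <| by
      rintro x ⟨⟨hxU, -⟩, hεx : ε ≤ dist x p⟩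
      exact h.equilibrium_lt hxU (dist_pos.1 (hε.trans_le hεx))
  exact ⟨η, hη, fun x hx hxv hεx => hle x ⟨⟨hx, hxv⟩, hεx⟩⟩

theorem exists_forall_dist_le_of_le_sub (h : IsStrictLyapunov T W U p) {θ : ℝ} (hθ : 0 < θ)
    {K : Set X} (hKU : K ⊆ U) (hK : IsCompact K) {ε : ℝ} (hε : 0 < ε) :
    ∃ N : ℕ, ∀ n ≥ N, ∀ φ : ℕ → X, φ 0 ∈ K → (∀ m, φ m ∈ U) →
      (∀ m, W (φ (m + 1)) ≤ W (φ m) - θ * (W (φ m) - W (T (φ m)))) → dist (φ n) p ≤ ε := by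
  obtain ⟨v, hv⟩ := hK.bddAbove_image (h.continuousOn.mono hKU)
  obtain ⟨η, hη, hfar⟩ := h.exists_gt_forall_le_of_le_dist hε v
  obtain ⟨κ, hκ, hdec⟩ := h.exists_pos_forall_le_sub_map hη v
  obtain ⟨N, hN⟩ := exists_nat_gt ((v - W p) / (θ * κ))
  refine ⟨N, fun n hn φ hφ0 hφU hstep => ?_⟩
  have hanti : Antitone fun m => W (φ m) := antitone_nat_of_succ_le fun m =>
    (hstep m).trans (sub_le_self _ (mul_nonneg hθ.le (sub_nonneg.2 (h.map_le (hφU m)))))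
  have hφ0v : W (φ 0) ≤ v := hv (mem_image_of_mem W hφ0)
  have hφv : ∀ m, W (φ m) ≤ v := fun m => (hanti m.zero_le).trans hφ0v
  by_contra! hεn
  have hlinear : W (φ n) ≤ W (φ 0) - n * (θ * κ) :=
    le_sub_mul_of_antitone_of_le_sub hanti (η := η) (κ := θ * κ)
      (fun m hm => (hstep m).trans (by gcongr; exact hdec _ (hφU m) hm (hφv m)))
      n (hfar _ (hφU n) (hφv n) hεn.le)
  have hNκ : v - W p < n * (θ * κ) := by
    rw [div_lt_iff₀ (mul_pos hθ hκ)] at hN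
    exact hN.trans_le (by gcongr)
  linarith [h.equilibrium_le (hφU n)]

theorem exists_tolerance (h : IsStrictLyapunov T W U p) :
    ∃ τ : X → ℝ, (∀ x ∈ U, 0 ≤ τ x) ∧ (∀ x ∈ U, x ≠ p → 0 < τ x) ∧
      (∀ x ∈ U, closedBall x (τ x) ⊆ U) ∧
      ∀ K ⊆ U, IsCompact K → ∀ ε > 0, ∃ N : ℕ, ∀ n ≥ N, ∀ φ : ℕ → X,
        φ 0 ∈ K → (∀ m, φ m ∈ U) →
        (∀ m, ∃ y ∈ closedBall (φ m) (τ (φ m)), φ (m + 1) ∈ closedBall (T y) (τ (T y))) →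
        dist (φ n) p ≤ ε := by
  obtain ⟨τ, hτ⟩ := h.exists_forall_isAdmissibleRadius
  have hball : ∀ x ∈ U, closedBall x (τ x) ⊆ U := fun x hx => (hτ x hx).2.2.closedBall_subset
  refine ⟨τ, fun x hx => (hτ x hx).1, fun x hx => (hτ x hx).2.1, hball, ?_⟩
  intro K hKU hK ε hε
  obtain ⟨N, hN⟩ := h.exists_forall_dist_le_of_le_sub (θ := 1 / 4) (by norm_num) hKU hK hε
  refine ⟨N, fun n hn φ hφ0 hφU hφ => hN n hn φ hφ0 hφU fun m => ?_⟩
  obtain ⟨y, hy, hz⟩ := hφ m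
  have hTy : T y ∈ U := h.mapsTo (hball _ (hφU m) hy)
  linarith [(hτ _ (hφU m)).2.2.perturbed_step_le (hτ _ hTy).2.2 hy hz]

end IsStrictLyapunov

end StrictLyapunov

section DouglasRachford

variable {d : ℕ} {lam : ℝ} {x : Euc d}

lemma e_apply (j i : Fin (d + 2)) : e d j i = if i = j then 1 else 0 := by
  simp [e]

lemma sum_smul_e_apply (s : Finset (Fin (d + 2))) (a : Fin (d + 2) → ℝ) (i : Fin (d + 2)) :
    (∑ j ∈ s, a j • e d j) i = if i ∈ s then a i else 0 := by
  simp [e_apply]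

lemma inner_e (x : Euc d) (j : Fin (d + 2)) : inner ℝ x (e d j) = x j := by
  simp [e, EuclideanSpace.inner_single_right]

lemma norm_smul_e_add_smul_e_sq (a b : ℝ) : ‖a • e d 0 + b • e d 1‖ ^ 2 = a ^ 2 + b ^ 2 := by
  rw [← real_inner_self_eq_norm_sq]
  simp only [inner_add_right, inner_smul_right, inner_e]
  simp [e_apply, sq]

lemma norm_sub_smul_e_add_smul_e_sq (x : Euc d) (a b : ℝ) :
    ‖x - (a • e d 0 + b • e d 1)‖ ^ 2 = ‖x‖ ^ 2 - 2 * (a * x 0 + b * x 1) + (a ^ 2 + b ^ 2) := by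
  rw [norm_sub_sq_real, norm_smul_e_add_smul_e_sq]
  simp only [inner_add_right, inner_smul_right, inner_e]

/-- The squared distance from `x` to the line `L_λ`, whose point nearest to `x` is
`x₁ e₁ + λ e₂`. -/
def lineDistSq (lam : ℝ) (x : Euc d) : ℝ := ‖x - (x 0 • e d 0 + lam • e d 1)‖ ^ 2

lemma lineDistSq_nonneg (lam : ℝ) (x : Euc d) : 0 ≤ lineDistSq lam x := sq_nonneg _

lemma lineDistSq_eq (lam : ℝ) (x : Euc d) :
    lineDistSq lam x = ‖x‖ ^ 2 - x 0 ^ 2 - 2 * lam * x 1 + lam ^ 2 := by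
  rw [lineDistSq, norm_sub_smul_e_add_smul_e_sq]
  ring

lemma lineDistSq_inv_norm_smul (hx : x ≠ 0) :
    lineDistSq lam (‖x‖⁻¹ • x) =
      1 - (x 0 / ‖x‖) ^ 2 - 2 * lam * (x 1 / ‖x‖) + lam ^ 2 := by
  have hunit : ‖‖x‖⁻¹ • x‖ = 1 := norm_smul_inv_norm (𝕜 := ℝ) hx
  rw [lineDistSq_eq, hunit]
  simp only [PiLp.smul_apply, smul_eq_mul]
  ring

@[fun_prop]
lemma continuous_lineDistSq (lam : ℝ) : Continuous (lineDistSq lam : Euc d → ℝ) := by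
  unfold lineDistSq
  fun_prop

lemma xStar_zero (d : ℕ) (lam : ℝ) : xStar d lam 0 = √(1 - lam ^ 2) := by
  simp [xStar, e_apply]

lemma norm_xStar (d : ℕ) (hlam : lam ^ 2 ≤ 1) : ‖xStar d lam‖ = 1 := by
  rw [← sq_eq_sq₀ (norm_nonneg _) zero_le_one, xStar, norm_smul_e_add_smul_e_sq,
    Real.sq_sqrt (sub_nonneg.2 hlam)]
  ring

lemma norm_sub_xStar_sq (lam : ℝ) (x : Euc d) :
    ‖x - xStar d lam‖ ^ 2 = lineDistSq lam x + (x 0 - √(1 - lam ^ 2)) ^ 2 := by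
  rw [xStar, norm_sub_smul_e_add_smul_e_sq, lineDistSq_eq]
  ring

lemma ne_zero_of_mem_Hplus (hx : x ∈ Hplus d) : x ≠ 0 := by
  rintro rfl
  simp [Hplus] at hx

lemma isOpen_Hplus (d : ℕ) : IsOpen (Hplus d) :=
  isOpen_lt continuous_const (by fun_prop)

lemma eq_xStar_of_norm_eq_one (hx : x ∈ Hplus d) (hnorm : ‖x‖ = 1) (hline : lineDistSq lam x = 0) :
    x = xStar d lam := by
  have hx_line : x = x 0 • e d 0 + lam • e d 1 := by
    simpa [lineDistSq, sub_eq_zero] using hline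
  have hx0 : x 0 = √(1 - lam ^ 2) := by
    have hsq : x 0 ^ 2 = 1 - lam ^ 2 := by
      have := norm_smul_e_add_smul_e_sq (d := d) (x 0) lam
      rw [← hx_line, hnorm] at this
      linarith
    rw [← hsq, Real.sqrt_sq (le_of_lt hx)]
  rw [xStar, ← hx0]
  exact hx_line

lemma DR_eq (lam : ℝ) (x : Euc d) :
    DR d lam x =
      (1 - 1 / ‖x‖) • (x - x 0 • e d 0) + ((x 0 / ‖x‖) • e d 0 + lam • e d 1) := by
  ext i
  refine Fin.cases ?_ (fun i => Fin.cases ?_ (fun i => ?_) i) i <;>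
    simp [DR, e_apply, sum_smul_e_apply, Fin.ext_iff]

lemma DR_apply_zero (lam : ℝ) (x : Euc d) : DR d lam x 0 = x 0 / ‖x‖ := by
  simp [DR_eq, e_apply]

lemma lineDistSq_DR (lam : ℝ) (x : Euc d) :
    lineDistSq lam (DR d lam x) = (1 - 1 / ‖x‖) ^ 2 * (‖x‖ ^ 2 - x 0 ^ 2) := by
  have hnorm := norm_sub_smul_e_add_smul_e_sq x (x 0) 0
  rw [zero_smul, add_zero] at hnorm
  rw [lineDistSq, DR_apply_zero, DR_eq, add_sub_cancel_right, norm_smul, mul_pow, hnorm,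
    Real.norm_eq_abs, sq_abs]
  ring

lemma DR_xStar (d : ℕ) (hlam : lam ^ 2 ≤ 1) : DR d lam (xStar d lam) = xStar d lam := by
  rw [DR_eq, norm_xStar d hlam, xStar_zero]
  simp [xStar]

lemma mapsTo_DR (d : ℕ) (lam : ℝ) : MapsTo (DR d lam) (Hplus d) (Hplus d) := by
  intro x hx
  change 0 < DR d lam x 0
  rw [DR_apply_zero]
  exact div_pos hx (norm_pos_iff.2 (ne_zero_of_mem_Hplus hx))

lemma continuousOn_DR (d : ℕ) (lam : ℝ) : ContinuousOn (DR d lam) {0}ᶜ := by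
  have hnorm : ∀ x ∈ ({0}ᶜ : Set (Euc d)), ‖x‖ ≠ 0 := fun x hx => norm_ne_zero_iff.2 hx
  unfold DR
  fun_prop (disch := assumption)

/-- The Lyapunov function `2 dist(x, L_λ)² + x₁² - 2 (1 - λ²) log x₁` of the Douglas–Rachford
operator. It is meaningful on `H₊` only, as `Real.log` is even. -/
def lyapunov (lam : ℝ) (x : Euc d) : ℝ :=
  2 * lineDistSq lam x + x 0 ^ 2 - 2 * (1 - lam ^ 2) * Real.log (x 0)

lemma continuousOn_lyapunov (d : ℕ) (lam : ℝ) :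
    ContinuousOn (lyapunov lam : Euc d → ℝ) (Hplus d) := by
  have hlog : ContinuousOn (fun x : Euc d => Real.log (x 0)) (Hplus d) :=
    ContinuousOn.log (by fun_prop) fun x hx => ne_of_gt hx
  unfold lyapunov
  fun_prop

lemma le_lyapunov_sub_lyapunov_DR (hlam : lam ^ 2 ≤ 1) (hx : x ∈ Hplus d) :
    x 0 ^ 2 * (1 - 1 / ‖x‖) ^ 2 + 2 * ‖x‖ * lineDistSq lam (‖x‖⁻¹ • x) ≤
      lyapunov lam x - lyapunov lam (DR d lam x) := by
  have hx0 : 0 < x 0 := hx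
  have hx_ne := ne_zero_of_mem_Hplus hx
  have hr : 0 < ‖x‖ := norm_pos_iff.2 hx_ne
  have hlog : (1 - lam ^ 2) * Real.log ‖x‖ ≤ (1 - lam ^ 2) * (‖x‖ - 1) :=
    mul_le_mul_of_nonneg_left (Real.log_le_sub_one_of_pos hr) (sub_nonneg.2 hlam)
  rw [lyapunov, lyapunov, lineDistSq_DR, DR_apply_zero, lineDistSq_inv_norm_smul hx_ne,
    lineDistSq_eq, Real.log_div hx0.ne' hr.ne']
  have hdifference :
      2 * (‖x‖ ^ 2 - x 0 ^ 2 - 2 * lam * x 1 + lam ^ 2) + x 0 ^ 2 -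
          (2 * ((1 - 1 / ‖x‖) ^ 2 * (‖x‖ ^ 2 - x 0 ^ 2)) + (x 0 / ‖x‖) ^ 2) -
          2 * ((1 - lam ^ 2) * (‖x‖ - 1)) =
        x 0 ^ 2 * (1 - 1 / ‖x‖) ^ 2 +
          2 * ‖x‖ * (1 - (x 0 / ‖x‖) ^ 2 - 2 * lam * (x 1 / ‖x‖) + lam ^ 2) := by
    field_simp
    ring
  linarith

lemma lyapunov_DR_lt (hlam : lam ^ 2 ≤ 1) (hx : x ∈ Hplus d) (hne : x ≠ xStar d lam) :
    lyapunov lam (DR d lam x) < lyapunov lam x := by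
  refine sub_pos.1 (lt_of_lt_of_le ?_ (le_lyapunov_sub_lyapunov_DR hlam hx))
  have hx0 : 0 < x 0 := hx
  have hr : 0 < ‖x‖ := norm_pos_iff.2 (ne_zero_of_mem_Hplus hx)
  have hline := lineDistSq_nonneg lam (‖x‖⁻¹ • x)
  rcases eq_or_ne ‖x‖ 1 with hnorm | hnorm
  · have hline_ne : lineDistSq lam x ≠ 0 := fun h => hne (eq_xStar_of_norm_eq_one hx hnorm h)
    have hline_pos := (lineDistSq_nonneg lam x).lt_of_ne' hline_ne
    simpa [hnorm] using hline_pos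
  · have hne_zero : 1 - 1 / ‖x‖ ≠ 0 := by
      rw [sub_ne_zero, ne_comm, one_div, inv_ne_one]
      exact hnorm
    positivity

lemma norm_sub_xStar_sq_add_le_lyapunov (hlam : lam ^ 2 < 1) (hx : x ∈ Hplus d) :
    ‖x - xStar d lam‖ ^ 2 + (1 - lam ^ 2) * (1 - 2 * Real.log √(1 - lam ^ 2)) ≤
      lyapunov lam x := by
  have hx0 : 0 < x 0 := hx
  have hs : 0 < √(1 - lam ^ 2) := Real.sqrt_pos.2 (sub_pos.2 hlam)
  have hs_sq : 1 - lam ^ 2 = √(1 - lam ^ 2) ^ 2 := (Real.sq_sqrt (sub_pos.2 hlam).le).symm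
  rw [norm_sub_xStar_sq, lyapunov]
  set s := √(1 - lam ^ 2)
  rw [hs_sq]
  have hlog : s ^ 2 * (Real.log (x 0) - Real.log s) ≤ s * x 0 - s ^ 2 :=
    calc s ^ 2 * (Real.log (x 0) - Real.log s)
        = s ^ 2 * Real.log (x 0 / s) := by rw [Real.log_div hx0.ne' hs.ne']
      _ ≤ s ^ 2 * (x 0 / s - 1) := by gcongr; exact Real.log_le_sub_one_of_pos (by positivity)
      _ = s * x 0 - s ^ 2 := by field_simp
  linarith [lineDistSq_nonneg lam x]

lemma exp_le_of_lyapunov_le (hlam : lam ^ 2 < 1) (hx : x ∈ Hplus d) {c : ℝ}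
    (hc : lyapunov lam x ≤ c) : Real.exp (-(c / (2 * (1 - lam ^ 2)))) ≤ x 0 := by
  have hm : 0 < 2 * (1 - lam ^ 2) := by linarith
  rw [← Real.le_log_iff_exp_le hx, neg_le, le_div_iff₀ hm]
  rw [lyapunov] at hc
  linarith [lineDistSq_nonneg lam x, sq_nonneg (x 0)]

lemma isCompact_lyapunov_sublevel (d : ℕ) (hlam : lam ^ 2 < 1) (c : ℝ) :
    IsCompact {x ∈ Hplus d | lyapunov lam x ≤ c} := by
  set R := √(c - (1 - lam ^ 2) * (1 - 2 * Real.log √(1 - lam ^ 2)))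
  set a := Real.exp (-(c / (2 * (1 - lam ^ 2))))
  set A : Set (Euc d) := closedBall (xStar d lam) R ∩ {x | a ≤ x 0}
  have hA : IsCompact A :=
    (isCompact_closedBall _ _).inter_right (isClosed_le continuous_const (by fun_prop))
  have hAH : A ⊆ Hplus d := fun x hx => (Real.exp_pos _).trans_le hx.2
  have hsublevel : {x ∈ Hplus d | lyapunov lam x ≤ c} = A ∩ lyapunov lam ⁻¹' Iic c := by
    ext x
    refine ⟨fun ⟨hx, hxc⟩ => ⟨⟨?_, exp_le_of_lyapunov_le hlam hx hxc⟩, hxc⟩,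
      fun ⟨hx, hxc⟩ => ⟨hAH hx, hxc⟩⟩
    rw [mem_closedBall, dist_eq_norm]
    have hbound := norm_sub_xStar_sq_add_le_lyapunov hlam hx
    exact Real.le_sqrt_of_sq_le (by linarith)
  rw [hsublevel]
  have hclosed : IsClosed (A ∩ lyapunov lam ⁻¹' Iic c) :=
    ((continuousOn_lyapunov d lam).mono hAH).preimage_isClosed_of_isClosed hA.isClosed isClosed_Iic
  exact hA.of_isClosed_subset hclosed inter_subset_left

theorem isStrictLyapunov_DR (d : ℕ) (hlam : lam ^ 2 < 1) :
    IsStrictLyapunov (DR d lam) (lyapunov lam) (Hplus d) (xStar d lam) where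
  isOpen := isOpen_Hplus d
  mapsTo := mapsTo_DR d lam
  continuousOn_map := (continuousOn_DR d lam).mono fun _ => ne_zero_of_mem_Hplus
  continuousOn := continuousOn_lyapunov d lam
  isCompact_sublevel := isCompact_lyapunov_sublevel d hlam
  map_fixed := DR_xStar d hlam.le
  map_lt _ := lyapunov_DR_lt hlam.le

end DouglasRachford

theorem stmt17_general (d : ℕ) (lam : ℝ) (hlam : |lam| < 1) :
    ∃ τ : Euc d → ℝ,
      (∀ x ∈ Hplus d, 0 ≤ τ x) ∧
      (∀ x ∈ Hplus d, x ≠ xStar d lam → 0 < τ x) ∧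
      (∀ x ∈ Hplus d, closedBall x (τ x) ⊆ Hplus d) ∧
      ∀ K : Set (Euc d), K ⊆ Hplus d → IsCompact K →
        ∀ ε : ℝ, 0 < ε → ∃ N : ℕ, ∀ n ≥ N, ∀ x ∈ K,
          ∀ φ : ℕ → Euc d, PerturbedSol d (DR d lam) τ x φ →
            ‖φ n - xStar d lam‖ ≤ ε := by
  obtain ⟨τ, hτ_nonneg, hτ_pos, hτ_ball, hτ⟩ :=
    (isStrictLyapunov_DR d ((sq_lt_one_iff_abs_lt_one lam).2 hlam)).exists_tolerance
  refine ⟨τ, hτ_nonneg, hτ_pos, hτ_ball, fun K hKH hK ε hε => ?_⟩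
  obtain ⟨N, hN⟩ := hτ K hKH hK ε hε
  refine ⟨N, fun n hn x hx φ ⟨hφ0, hφH, hφ⟩ => ?_⟩
  rw [← dist_eq_norm]
  exact hN n hn φ (hφ0 ▸ hx) hφH hφ

/-- For `λ ∈ [0,1)` there is `τ : H₊ → [0,∞)` with `τ(x) > 0` for
`x ≠ x*` and `B[x,τ(x)] ⊆ H₊`, such that for every compact `K ⊆ H₊` the `τ`-perturbed
Douglas–Rachford iterations starting in `K` converge to `x*` uniformly. -/
theorem stmt17 (d : ℕ) (lam : ℝ) (h0 : 0 ≤ lam) (h1 : lam < 1) :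
    ∃ τ : Euc d → ℝ,
      (∀ x ∈ Hplus d, 0 ≤ τ x) ∧
      (∀ x ∈ Hplus d, x ≠ xStar d lam → 0 < τ x) ∧
      (∀ x ∈ Hplus d, closedBall x (τ x) ⊆ Hplus d) ∧
      ∀ K : Set (Euc d), K ⊆ Hplus d → IsCompact K →
        ∀ ε : ℝ, 0 < ε → ∃ N : ℕ, ∀ n ≥ N, ∀ x ∈ K,
          ∀ φ : ℕ → Euc d, PerturbedSol d (DR d lam) τ x φ →
            ‖φ n - xStar d lam‖ ≤ ε :=
  stmt17_general d lam (abs_lt.2 ⟨neg_one_lt_zero.trans_le h0, h1⟩)
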